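/- (The Huber location minimizer is biased for an asymmetric zero-mean density.) Let p_ε : ℝ → ℝ be the probability density defined by p_ε(t) = (1/2) e^{−(t + 1/4)} for t ≥ −1/4 and p_ε(t) = e^{2(t + 1/4)} for t < −1/4, which has zero mean. Then for every σ > 0, if ν₀ ∈ ℝ minimizes ν ↦ ∫_ℝ ℓ_σ(u − ν) p_ε(u) du over ℝ, then ν₀ ≠ 0. -/

import Mathlib

open MeasureTheory

/-- The Huber loss with scale `σ`. -/
noncomputable def huberLoss (σ t : ℝ) : ℝ :=
  if |t| ≤ σ then t ^ 2 else 2 * σ * |t| - σ ^ 2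

/-- The asymmetric zero-mean density `p_ε` from the counterexample. -/
noncomputable def pEps (t : ℝ) : ℝ :=
  if -(1/4) ≤ t then (1/2) * Real.exp (-(t + 1/4)) else Real.exp (2 * (t + 1/4))

open Set Filter Topology

/-- The Huber loss is the Moreau envelope of `2 * σ * |·|`. -/
theorem huberLoss_le_sq_add (σ t s : ℝ) (hσ : 0 < σ) :
    huberLoss σ t ≤ (t - s) ^ 2 + 2 * σ * |s| := by
  unfold huberLoss
  split_ifs with h
  · obtain ⟨h1, h2⟩ := abs_le.mp h
    rcases abs_cases s with ⟨hs, hs'⟩ | ⟨hs, hs'⟩ <;> rw [hs] <;> nlinarith [sq_nonneg s]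
  · have h3 : |t| ≤ |t - s| + |s| := by simpa using abs_add_le (t - s) s
    nlinarith [sq_nonneg (|t - s| - σ), sq_abs (t - s)]

/-- Half the derivative of the Huber loss: the identity clipped to `[-σ, σ]`. -/
noncomputable def huberScore (σ t : ℝ) : ℝ :=
  t - max (t - σ) 0 + max (-σ - t) 0

theorem huberLoss_eq_sq_add (σ t : ℝ) (hσ : 0 < σ) :
    huberLoss σ t = huberScore σ t ^ 2 + 2 * σ * |t - huberScore σ t| := by
  unfold huberLoss huberScore
  split_ifs with h
  · obtain ⟨h1, h2⟩ := abs_le.mp h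
    rw [max_eq_right (by linarith), max_eq_right (by linarith)]
    simp
  · rcases lt_abs.mp (not_le.mp h) with h1 | h1
    · rw [max_eq_left (by linarith), max_eq_right (by linarith), abs_of_pos (by linarith),
        abs_of_pos (by linarith)]
      ring
    · rw [max_eq_right (by linarith), max_eq_left (by linarith), abs_of_neg (by linarith),
        abs_of_neg (by linarith)]
      ring

theorem huberLoss_sub_le (σ t ν : ℝ) (hσ : 0 < σ) :
    huberLoss σ (t - ν) ≤ huberLoss σ t - 2 * ν * huberScore σ t + ν ^ 2 := by
  have h := huberLoss_le_sq_add σ (t - ν) (t - huberScore σ t) hσ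
  rw [huberLoss_eq_sq_add σ t hσ]
  linarith

theorem huberLoss_nonneg (σ t : ℝ) (hσ : 0 < σ) : 0 ≤ huberLoss σ t := by
  rw [huberLoss_eq_sq_add σ t hσ]
  positivity

theorem huberLoss_le_sq (σ t : ℝ) (hσ : 0 < σ) : huberLoss σ t ≤ t ^ 2 := by
  simpa using huberLoss_le_sq_add σ t 0 hσ

theorem measurable_huberLoss (σ : ℝ) : Measurable (huberLoss σ) :=
  Measurable.ite (measurableSet_le (by fun_prop) (by fun_prop)) (by fun_prop) (by fun_prop)

theorem measurable_pEps : Measurable pEps :=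
  Measurable.ite measurableSet_Ici (by fun_prop) (by fun_prop)

theorem pEps_nonneg (t : ℝ) : 0 ≤ pEps t := by
  unfold pEps
  split_ifs <;> positivity

theorem pEps_of_le {t : ℝ} (ht : -(1 / 4) ≤ t) : pEps t = 1 / 2 * Real.exp (-(t + 1 / 4)) :=
  if_pos ht

theorem pEps_of_lt {t : ℝ} (ht : t < -(1 / 4)) : pEps t = Real.exp (2 * (t + 1 / 4)) :=
  if_neg ht.not_ge

theorem pEps_le_exp_neg_abs (t : ℝ) : pEps t ≤ 2 * Real.exp (-|t|) := by
  have key : Real.exp (1 / 4) ≤ 2 := by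
    rw [← Real.le_log_iff_exp_le (by norm_num)]
    linarith [Real.log_two_gt_d9]
  rcases le_or_gt (-(1 / 4)) t with ht | ht
  · rw [pEps_of_le ht]
    have h : Real.exp (-(t + 1 / 4)) ≤ Real.exp (1 / 4) * Real.exp (-|t|) := by
      rw [← Real.exp_add]
      apply Real.exp_le_exp.mpr
      rcases abs_cases t with ⟨h, h'⟩ | ⟨h, h'⟩ <;> rw [h] <;> linarith
    nlinarith [Real.exp_pos (-|t|)]
  · rw [pEps_of_lt ht]
    have h : Real.exp (2 * (t + 1 / 4)) ≤ Real.exp (1 / 4) * Real.exp (-|t|) := by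
      rw [← Real.exp_add]
      apply Real.exp_le_exp.mpr
      rw [abs_of_neg (by linarith)]
      linarith
    nlinarith [Real.exp_pos (-|t|)]

theorem sq_one_add_sq_mul_pEps_le (t : ℝ) : (1 + t ^ 2) ^ 2 * pEps t ≤ 58 := by
  have h1 := Real.pow_div_factorial_le_exp |t| (abs_nonneg t) 2
  have h2 := Real.pow_div_factorial_le_exp |t| (abs_nonneg t) 4
  have h3 := Real.one_le_exp (abs_nonneg t)
  have h4 : |t| ^ 4 = t ^ 4 := Even.pow_abs (by decide) t
  rw [sq_abs] at h1
  rw [h4] at h2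
  norm_num [Nat.factorial] at h1 h2
  calc (1 + t ^ 2) ^ 2 * pEps t ≤ (29 * Real.exp |t|) * (2 * Real.exp (-|t|)) := by
        apply mul_le_mul _ (pEps_le_exp_neg_abs t) (pEps_nonneg t) (by positivity)
        nlinarith
    _ = 58 * (Real.exp |t| * Real.exp (-|t|)) := by ring
    _ = 58 := by rw [← Real.exp_add]; simp

/-- Functions of at most quadratic growth are integrable against `pEps`. -/
theorem integrable_mul_pEps {f : ℝ → ℝ} (hf : Measurable f) (C : ℝ)
    (h : ∀ u, |f u| ≤ C * (1 + u ^ 2)) : Integrable fun u => f u * pEps u := by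
  refine (integrable_inv_one_add_sq.const_mul (C * 58)).mono'
    (hf.mul measurable_pEps).aestronglyMeasurable (.of_forall fun u => ?_)
  have hpos : 0 < 1 + u ^ 2 := by positivity
  have hC : 0 ≤ C := by
    by_contra! hC
    nlinarith [h u, abs_nonneg (f u)]
  rw [Real.norm_eq_abs, abs_mul, abs_of_nonneg (pEps_nonneg u), ← div_eq_mul_inv,
    le_div_iff₀ hpos]
  calc |f u| * pEps u * (1 + u ^ 2) ≤ C * (1 + u ^ 2) * pEps u * (1 + u ^ 2) := by
        gcongr
        · exact pEps_nonneg u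
        · exact h u
    _ = C * ((1 + u ^ 2) ^ 2 * pEps u) := by ring
    _ ≤ C * 58 := by
        gcongr
        exact sq_one_add_sq_mul_pEps_le u

theorem integrable_pEps : Integrable pEps := by
  simpa using integrable_mul_pEps (f := fun _ => 1) measurable_const 1
    fun u => by rw [abs_one]; nlinarith [sq_nonneg u]

theorem integrable_max_sub_mul_pEps (a : ℝ) : Integrable fun u => max (u - a) 0 * pEps u := by
  refine integrable_mul_pEps (by fun_prop) (1 + |a|) fun u => ?_
  rw [abs_of_nonneg (le_max_right _ _)]
  apply max_le
  · nlinarith [neg_abs_le a, abs_nonneg a, sq_nonneg (u - 1),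
      mul_nonneg (abs_nonneg a) (sq_nonneg u)]
  · positivity

theorem integrable_max_rsub_mul_pEps (a : ℝ) : Integrable fun u => max (a - u) 0 * pEps u := by
  refine integrable_mul_pEps (by fun_prop) (1 + |a|) fun u => ?_
  rw [abs_of_nonneg (le_max_right _ _)]
  apply max_le
  · nlinarith [le_abs_self a, abs_nonneg a, sq_nonneg (u + 1),
      mul_nonneg (abs_nonneg a) (sq_nonneg u)]
  · positivity

theorem integral_max_sub_mul_pEps {a : ℝ} (ha : -(1 / 4) ≤ a) :
    ∫ u, max (u - a) 0 * pEps u = 1 / 2 * Real.exp (-(a + 1 / 4)) := by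
  rw [← setIntegral_eq_integral_of_forall_compl_eq_zero (s := Ioi a)]
  swap
  · intro u hu
    rw [max_eq_right (by simpa using hu), zero_mul]
  rw [integral_Ioi_of_hasDerivAt_of_tendsto
    (f := fun u => -(1 / 2) * ((u - a + 1) * Real.exp (-(u + 1 / 4)))) (m := 0)
    (by fun_prop) _ (integrable_max_sub_mul_pEps a).integrableOn]
  · simp
  · have h1 : Tendsto (fun u : ℝ => u ^ 1 * Real.exp (-u)) atTop (𝓝 0) :=
      Real.tendsto_pow_mul_exp_neg_atTop_nhds_zero 1
    have h2 : Tendsto (fun u : ℝ => Real.exp (-u)) atTop (𝓝 0) :=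
      Real.tendsto_exp_neg_atTop_nhds_zero
    have h3 := ((h1.add (h2.const_mul (1 - a))).const_mul (-(1 / 2) * Real.exp (-(1 / 4))))
    simp only [mul_zero, add_zero] at h3
    refine h3.congr fun u => ?_
    rw [neg_add, Real.exp_add]
    ring
  · intro u hu
    have hu' : a < u := hu
    rw [max_eq_left (by linarith), pEps_of_le (by linarith)]
    have h1 : HasDerivAt (fun u : ℝ => u - a + 1) 1 u := ((hasDerivAt_id u).sub_const a).add_const 1
    have h2 : HasDerivAt (fun u : ℝ => Real.exp (-(u + 1 / 4))) (Real.exp (-(u + 1 / 4)) * -1) u :=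
      (((hasDerivAt_id u).add_const (1 / 4)).neg).exp
    refine ((h1.fun_mul h2).const_mul (-(1 / 2))).congr_deriv ?_
    ring

theorem tendsto_mul_exp_two_mul_atBot (b c : ℝ) :
    Tendsto (fun u : ℝ => (b + c * u) * Real.exp (2 * (u + 1 / 4))) atBot (𝓝 0) := by
  have h1 : Tendsto (fun u : ℝ => u ^ 1 * Real.exp (-u)) atTop (𝓝 0) :=
    Real.tendsto_pow_mul_exp_neg_atTop_nhds_zero 1
  have h2 : Tendsto (fun u : ℝ => Real.exp (-u)) atTop (𝓝 0) :=
    Real.tendsto_exp_neg_atTop_nhds_zero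
  have h3 := ((h1.const_mul (-c / 2)).add (h2.const_mul b)).const_mul (Real.exp (1 / 2))
  simp only [mul_zero, add_zero] at h3
  have h4 : Tendsto (fun u : ℝ => (-2) * u) atBot atTop :=
    tendsto_id.const_mul_atBot_of_neg (by norm_num)
  refine (h3.comp h4).congr fun u => ?_
  have : Real.exp (2 * (u + 1 / 4)) = Real.exp (1 / 2) * Real.exp (-(-2 * u)) := by
    rw [← Real.exp_add]
    ring_nf
  rw [this]
  simp only [Function.comp]
  ring

theorem hasDerivAt_exp_two_mul (u : ℝ) :
    HasDerivAt (fun u : ℝ => Real.exp (2 * (u + 1 / 4))) (Real.exp (2 * (u + 1 / 4)) * 2) u := by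
  simpa only [id, mul_one] using (((hasDerivAt_id u).add_const (1 / 4)).const_mul 2).exp

theorem integral_max_rsub_mul_pEps {a : ℝ} (ha : a ≤ -(1 / 4)) :
    ∫ u, max (a - u) 0 * pEps u = 1 / 4 * Real.exp (2 * (a + 1 / 4)) := by
  rw [← setIntegral_eq_integral_of_forall_compl_eq_zero (s := Iic a)]
  swap
  · intro u hu
    have hu' : a < u := by simpa using hu
    rw [max_eq_right (by linarith), zero_mul]
  rw [integral_Iic_of_hasDerivAt_of_tendsto
    (f := fun u => ((a / 2 + 1 / 4) + -(1 / 2) * u) * Real.exp (2 * (u + 1 / 4))) (m := 0)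
    (by fun_prop) _ (integrable_max_rsub_mul_pEps a).integrableOn
    (tendsto_mul_exp_two_mul_atBot _ _)]
  · ring
  · intro u hu
    have hu' : u < a := hu
    rw [max_eq_left (by linarith), pEps_of_lt (by linarith)]
    have h1 : HasDerivAt (fun u : ℝ => (a / 2 + 1 / 4) + -(1 / 2) * u) (-(1 / 2) * 1) u :=
      ((hasDerivAt_id u).const_mul _).const_add _
    refine (h1.fun_mul (hasDerivAt_exp_two_mul u)).congr_deriv ?_
    ring

theorem integral_pEps : ∫ u, pEps u = 1 := by
  rw [← integral_add_compl (measurableSet_Iio (a := -(1 / 4 : ℝ))) integrable_pEps, compl_Iio,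
    setIntegral_congr_fun measurableSet_Iio fun u hu => pEps_of_lt hu,
    setIntegral_congr_fun measurableSet_Ici fun u hu => pEps_of_le hu,
    integral_Ici_eq_integral_Ioi, ← integral_Iic_eq_integral_Iio]
  have h1 (u : ℝ) : Real.exp (2 * (u + 1 / 4)) = Real.exp (1 / 2) * Real.exp (2 * u) := by
    rw [← Real.exp_add]
    ring_nf
  have h2 (u : ℝ) : Real.exp (-(u + 1 / 4)) = Real.exp (-(1 / 4)) * Real.exp (-u) := by
    rw [← Real.exp_add]
    ring_nf
  simp_rw [h1, h2]
  rw [integral_const_mul, integral_const_mul, integral_const_mul, integral_exp_neg_Ioi,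
    integral_exp_mul_Iic (by norm_num), mul_div_assoc', ← Real.exp_add, ← Real.exp_add]
  norm_num

theorem integral_huberScore_mul_pEps_of_lt {σ : ℝ} (hσ : 0 < σ) (h : σ < 1 / 4) :
    ∫ u, huberScore σ u * pEps u =
      1 / 2 * Real.exp (σ - 1 / 4) - 1 / 2 * Real.exp (-σ - 1 / 4) - σ := by
  have hs (u : ℝ) : huberScore σ u * pEps u =
      max (u - -σ) 0 * pEps u - max (u - σ) 0 * pEps u - σ * pEps u := by
    have : max (-σ - u) 0 = max (u - -σ) 0 - (u + σ) := by
      rcases le_total u (-σ) with h | h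
      · rw [max_eq_left (by linarith), max_eq_right (by linarith)]; ring
      · rw [max_eq_right (by linarith), max_eq_left (by linarith)]; ring
    rw [huberScore, this]
    ring
  simp_rw [hs]
  rw [integral_sub ((integrable_max_sub_mul_pEps _).sub' (integrable_max_sub_mul_pEps _))
    (integrable_pEps.const_mul _), integral_sub (integrable_max_sub_mul_pEps _)
    (integrable_max_sub_mul_pEps _), integral_const_mul, integral_pEps,
    integral_max_sub_mul_pEps (by linarith), integral_max_sub_mul_pEps (by linarith)]
  ring_nf

theorem integral_huberScore_mul_pEps_of_le {σ : ℝ} (h : 1 / 4 ≤ σ) :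
    ∫ u, huberScore σ u * pEps u =
      1 / 4 * Real.exp (1 / 2 - 2 * σ) - 1 / 2 * Real.exp (-σ - 1 / 4) := by
  have hs (u : ℝ) : huberScore σ u * pEps u =
      max (u - -(1 / 4)) 0 * pEps u - max (-(1 / 4) - u) 0 * pEps u - 1 / 4 * pEps u
        - max (u - σ) 0 * pEps u + max (-σ - u) 0 * pEps u := by
    have : max (-(1 / 4) - u) 0 = max (u - -(1 / 4)) 0 - (u + 1 / 4) := by
      rcases le_total u (-(1 / 4)) with h | h
      · rw [max_eq_left (by linarith), max_eq_right (by linarith)]; ring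
      · rw [max_eq_right (by linarith), max_eq_left (by linarith)]; ring
    rw [huberScore, this]
    ring
  have i1 := integrable_max_sub_mul_pEps (-(1 / 4))
  have i2 := integrable_max_rsub_mul_pEps (-(1 / 4))
  have i3 := integrable_pEps.const_mul (1 / 4)
  have i4 := integrable_max_sub_mul_pEps σ
  have i5 := integrable_max_rsub_mul_pEps (-σ)
  simp_rw [hs]
  rw [integral_add (((i1.sub' i2).sub' i3).sub' i4) i5, integral_sub ((i1.sub' i2).sub' i3) i4,
    integral_sub (i1.sub' i2) i3, integral_sub i1 i2, integral_const_mul, integral_pEps,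
    integral_max_sub_mul_pEps le_rfl, integral_max_rsub_mul_pEps le_rfl,
    integral_max_sub_mul_pEps (by linarith), integral_max_rsub_mul_pEps (by linarith)]
  norm_num
  ring_nf

theorem integral_huberScore_mul_pEps_neg {σ : ℝ} (hσ : 0 < σ) :
    ∫ u, huberScore σ u * pEps u < 0 := by
  rcases lt_or_ge σ (1 / 4) with h | h
  · rw [integral_huberScore_mul_pEps_of_lt hσ h]
    have h1 : Real.exp (σ - 1 / 4) = Real.exp (-(1 / 4)) * Real.exp σ := by
      rw [← Real.exp_add]
      ring_nf
    have h2 : Real.exp (-σ - 1 / 4) = Real.exp (-(1 / 4)) * Real.exp (-σ) := by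
      rw [← Real.exp_add]
      ring_nf
    have h3 := Real.add_one_le_exp (-σ)
    have h4 : Real.exp σ * Real.exp (-σ) = 1 := by
      rw [← Real.exp_add]
      simp
    have h5 : Real.exp σ - Real.exp (-σ) ≤ 7 / 3 * σ := by
      have h6 : Real.exp σ * (1 - σ) ≤ 1 := by nlinarith [Real.exp_pos σ]
      have h7 : Real.exp σ ≤ 1 + 4 / 3 * σ := by nlinarith
      linarith
    have h8 : Real.exp (-(1 / 4)) ≤ 4 / 5 := by
      have h9 : Real.exp (1 / 4) * Real.exp (-(1 / 4)) = 1 := by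
        rw [← Real.exp_add]
        simp
      nlinarith [Real.add_one_le_exp (1 / 4 : ℝ), Real.exp_pos (-(1 / 4))]
    rw [h1, h2]
    nlinarith [mul_le_mul_of_nonneg_left h5 (Real.exp_pos (-(1 / 4))).le,
      mul_le_mul_of_nonneg_right h8 hσ.le]
  · rw [integral_huberScore_mul_pEps_of_le h]
    have h1 : Real.exp (1 / 2 - 2 * σ) = Real.exp (3 / 4 - σ) * Real.exp (-σ - 1 / 4) := by
      rw [← Real.exp_add]
      ring_nf
    have h2 : Real.exp (3 / 4 - σ) < 2 := by
      rw [← Real.lt_log_iff_exp_lt (by norm_num)]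
      linarith [Real.log_two_gt_d9]
    rw [h1]
    nlinarith [Real.exp_pos (-σ - 1 / 4)]

theorem integrable_huberScore_mul_pEps {σ : ℝ} (hσ : 0 < σ) :
    Integrable fun u => huberScore σ u * pEps u := by
  refine integrable_mul_pEps (by unfold huberScore; fun_prop) 1 fun u => ?_
  have h1 := huberLoss_eq_sq_add σ u hσ
  have h2 := huberLoss_le_sq σ u hσ
  have h3 : 0 ≤ 2 * σ * |u - huberScore σ u| := by positivity
  have h4 := sq_abs (huberScore σ u)
  nlinarith [sq_nonneg (|huberScore σ u| - 1)]

theorem integrable_huberLoss_sub_mul_pEps {σ : ℝ} (hσ : 0 < σ) (ν : ℝ) :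
    Integrable fun u => huberLoss σ (u - ν) * pEps u := by
  refine integrable_mul_pEps ((measurable_huberLoss σ).comp (by fun_prop)) (2 + 2 * ν ^ 2)
    fun u => ?_
  rw [abs_of_nonneg (huberLoss_nonneg _ _ hσ)]
  nlinarith [huberLoss_le_sq σ (u - ν) hσ, sq_nonneg (u + ν), sq_nonneg (u * ν)]

/-- The Huber location minimizer is biased for the asymmetric zero-mean density
`p_ε`: for every `σ > 0`, any minimizer `ν₀` of `ν ↦ ∫ ℓ_σ(u − ν) p_ε(u) du` is nonzero. -/
theorem huber_location_minimizer_ne_zero (σ : ℝ) (hσ : 0 < σ) (ν₀ : ℝ)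
    (hmin : ∀ ν : ℝ, (∫ u, huberLoss σ (u - ν₀) * pEps u) ≤ ∫ u, huberLoss σ (u - ν) * pEps u) :
    ν₀ ≠ 0 := by
  rintro rfl
  set m := ∫ u, huberScore σ u * pEps u with hm
  have hneg : m < 0 := integral_huberScore_mul_pEps_neg hσ
  have i0 := integrable_huberLoss_sub_mul_pEps hσ 0
  have i1 := (integrable_huberScore_mul_pEps hσ).const_mul (2 * m)
  have i2 := integrable_pEps.const_mul (m ^ 2)
  have hle : ∫ u, huberLoss σ (u - m) * pEps u ≤
      ∫ u, (huberLoss σ (u - 0) * pEps u - 2 * m * (huberScore σ u * pEps u)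
        + m ^ 2 * pEps u) := by
    refine integral_mono (integrable_huberLoss_sub_mul_pEps hσ m) ((i0.sub' i1).add i2) fun u => ?_
    have h := mul_le_mul_of_nonneg_right (huberLoss_sub_le σ u m hσ) (pEps_nonneg u)
    simp only [sub_zero]
    linarith
  rw [integral_add (i0.sub' i1) i2, integral_sub i0 i1, integral_const_mul, integral_const_mul,
    integral_pEps, ← hm] at hle
  nlinarith [hmin m]
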